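/- Let P be an N-point set in [0,1)², and let j ∈ ℕ₀² and m ∈ 𝔻_j be such that the dyadic interval I_{j,m} contains no point of P. Then the Haar coefficient of the discrepancy function satisfies μ_{j,m} = ∫_{[0,1)²} D_P(x)·h_{j,m}(x) dx = −N·2^{-2|j|-4}. -/

import Mathlib

open MeasureTheory

noncomputable section

/-- The half-open unit square `[0,1) × [0,1)` in `ℝ × ℝ`. -/
def unitSq : Set (ℝ × ℝ) := Set.Ico (0:ℝ) 1 ×ˢ Set.Ico (0:ℝ) 1

/-- The discrepancy function of the point configuration `p`. -/
def disc (N : ℕ) (p : Fin N → ℝ × ℝ) (x : ℝ × ℝ) : ℝ :=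
  (∑ i : Fin N, if 0 ≤ (p i).1 ∧ (p i).1 < x.1 ∧ 0 ≤ (p i).2 ∧ (p i).2 < x.2
    then (1:ℝ) else 0) - N * x.1 * x.2

/-- The dyadic interval `I_{j,m}`. -/
def dyadic (j m : ℕ × ℕ) : Set (ℝ × ℝ) :=
  Set.Ico ((m.1:ℝ)/2^j.1) (((m.1:ℝ)+1)/2^j.1) ×ˢ
    Set.Ico ((m.2:ℝ)/2^j.2) (((m.2:ℝ)+1)/2^j.2)

/-- The one-dimensional Haar function adapted to `[m/2^j, (m+1)/2^j)`. -/
def haar1 (j m : ℕ) (t : ℝ) : ℝ :=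
  if (m:ℝ)/2^j ≤ t ∧ t < (2*(m:ℝ)+1)/2^(j+1) then 1
  else if (2*(m:ℝ)+1)/2^(j+1) ≤ t ∧ t < ((m:ℝ)+1)/2^j then -1
  else 0

/-- The two-dimensional Haar function `h_{j,m}`. -/
def haar (j m : ℕ × ℕ) (x : ℝ × ℝ) : ℝ := haar1 j.1 m.1 x.1 * haar1 j.2 m.2 x.2

/-!
Both the indicator of `[0, x)` at a point and the product `x₁x₂` split into one-dimensional
factors, as does the Haar function, so every integral factors. A point outside `I_{j,m}` has a
coordinate outside the corresponding side of `I_{j,m}`; in that coordinate its counting function is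
constant on the support of the Haar function, which has mean zero, so the point contributes nothing.
Only the volume term remains, with value `-N ∏ᵢ ∫ t · h_{jᵢ,mᵢ}(t) dt = -N ∏ᵢ (-2^{-2jᵢ-2})`.
-/

/-- The one-dimensional dyadic interval `[m/2^j, (m+1)/2^j)`, the side of `dyadic`. -/
def dyadicIco (j m : ℕ) : Set ℝ := Set.Ico ((m : ℝ) / 2 ^ j) (((m : ℝ) + 1) / 2 ^ j)

section DyadicIco

variable (j m : ℕ)

lemma measurableSet_dyadicIco : MeasurableSet (dyadicIco j m) := measurableSet_Ico

lemma dyadicIco_succ_two_mul :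
    dyadicIco (j + 1) (2 * m) = Set.Ico ((m : ℝ) / 2 ^ j) ((2 * (m : ℝ) + 1) / 2 ^ (j + 1)) := by
  have left_eq : 2 * (m : ℝ) / 2 ^ (j + 1) = m / 2 ^ j := by field_simp; ring
  rw [dyadicIco, Nat.cast_mul, Nat.cast_ofNat, left_eq]

lemma dyadicIco_succ_two_mul_add_one :
    dyadicIco (j + 1) (2 * m + 1) =
      Set.Ico ((2 * (m : ℝ) + 1) / 2 ^ (j + 1)) (((m : ℝ) + 1) / 2 ^ j) := by
  have right_eq : (2 * (m : ℝ) + 1 + 1) / 2 ^ (j + 1) = (m + 1) / 2 ^ j := by field_simp; ring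
  rw [dyadicIco, Nat.cast_succ, Nat.cast_mul, Nat.cast_ofNat, right_eq]

lemma dyadicIco_endpoints_le : (m : ℝ) / 2 ^ j ≤ ((m : ℝ) + 1) / 2 ^ j := by
  gcongr
  linarith

lemma dyadicIco_succ_union :
    dyadicIco (j + 1) (2 * m) ∪ dyadicIco (j + 1) (2 * m + 1) = dyadicIco j m := by
  have mid_eq : (2 * (m : ℝ) + 1) / 2 ^ (j + 1) = m / 2 ^ j + 1 / 2 ^ (j + 1) := by
    field_simp
    ring
  have right_eq : ((m : ℝ) + 1) / 2 ^ j = m / 2 ^ j + 2 * (1 / 2 ^ (j + 1)) := by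
    field_simp
    ring
  have half_pos : (0 : ℝ) < 1 / 2 ^ (j + 1) := by positivity
  rw [dyadicIco_succ_two_mul, dyadicIco_succ_two_mul_add_one]
  exact Set.Ico_union_Ico_eq_Ico (by linarith) (by linarith)

lemma volume_real_dyadicIco : volume.real (dyadicIco j m) = 1 / 2 ^ j := by
  rw [dyadicIco, Real.volume_real_Ico_of_le (dyadicIco_endpoints_le j m)]
  ring

lemma setIntegral_id_dyadicIco :
    ∫ t in dyadicIco j m, t = (2 * (m : ℝ) + 1) / 2 ^ (2 * j + 1) := by
  rw [dyadicIco, integral_Ico_eq_integral_Ioc,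
    ← intervalIntegral.integral_of_le (dyadicIco_endpoints_le j m), integral_id]
  field_simp
  ring

variable {j m}

lemma dyadicIco_subset_Ico_zero_one (hm : m < 2 ^ j) : dyadicIco j m ⊆ Set.Ico 0 1 := by
  refine Set.Ico_subset_Ico (by positivity) ?_
  rw [div_le_one (by positivity)]
  exact_mod_cast hm

lemma integrableOn_dyadicIco {f : ℝ → ℝ} (hf : LocallyIntegrable f) :
    IntegrableOn f (dyadicIco j m) :=
  (hf.integrableOn_isCompact isCompact_Icc).mono_set Set.Ico_subset_Icc_self

end DyadicIco

section Haar1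

variable {j m : ℕ} {f : ℝ → ℝ}

lemma haar1_eq_zero_of_notMem {t : ℝ} (ht : t ∉ dyadicIco j m) : haar1 j m t = 0 := by
  rw [← dyadicIco_succ_union, Set.mem_union, not_or, dyadicIco_succ_two_mul,
    dyadicIco_succ_two_mul_add_one] at ht
  exact (if_neg ht.1).trans (if_neg ht.2)

lemma mul_haar1_eq_indicator_sub (f : ℝ → ℝ) (t : ℝ) :
    f t * haar1 j m t = (dyadicIco (j + 1) (2 * m)).indicator f t -
      (dyadicIco (j + 1) (2 * m + 1)).indicator f t := by
  simp only [haar1, dyadicIco_succ_two_mul, dyadicIco_succ_two_mul_add_one, Set.indicator_apply,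
    Set.mem_Ico]
  split_ifs with hleft hright
  · exact absurd hleft.2 hright.1.not_gt
  all_goals ring

lemma integrable_mul_haar1 (hf : LocallyIntegrable f) :
    Integrable (fun t => f t * haar1 j m t) := by
  simp only [mul_haar1_eq_indicator_sub]
  exact ((integrableOn_dyadicIco hf).integrable_indicator (measurableSet_dyadicIco _ _)).sub
    ((integrableOn_dyadicIco hf).integrable_indicator (measurableSet_dyadicIco _ _))

lemma integral_mul_haar1 (hf : LocallyIntegrable f) :
    ∫ t, f t * haar1 j m t =
      (∫ t in dyadicIco (j + 1) (2 * m), f t) - ∫ t in dyadicIco (j + 1) (2 * m + 1), f t := by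
  have hleft := measurableSet_dyadicIco (j + 1) (2 * m)
  have hright := measurableSet_dyadicIco (j + 1) (2 * m + 1)
  simp only [mul_haar1_eq_indicator_sub]
  rw [integral_sub ((integrableOn_dyadicIco hf).integrable_indicator hleft)
    ((integrableOn_dyadicIco hf).integrable_indicator hright),
    integral_indicator hleft, integral_indicator hright]

lemma integral_const_mul_haar1 (c : ℝ) : ∫ t, c * haar1 j m t = 0 := by
  rw [integral_mul_haar1 (locallyIntegrable_const c), setIntegral_const, setIntegral_const,
    volume_real_dyadicIco, volume_real_dyadicIco, sub_self]

lemma integral_id_mul_haar1 (j m : ℕ) : ∫ t, t * haar1 j m t = -1 / 2 ^ (2 * j + 2) := by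
  rw [integral_mul_haar1 (f := fun t => t) continuous_id.locallyIntegrable,
    setIntegral_id_dyadicIco, setIntegral_id_dyadicIco]
  push_cast
  field_simp
  ring

lemma integral_mul_haar1_of_eqOn_const {c : ℝ} (hf : ∀ t ∈ dyadicIco j m, f t = c) :
    ∫ t, f t * haar1 j m t = 0 := by
  rw [← integral_const_mul_haar1 (j := j) (m := m) c]
  congr 1 with t
  by_cases ht : t ∈ dyadicIco j m
  · rw [hf t ht]
  · rw [haar1_eq_zero_of_notMem ht, mul_zero, mul_zero]

end Haar1

lemma mem_Ico_iff_of_notMem_Ico {α : Type*} [LinearOrder α] {a l r t z : α}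
    (ha : a ∉ Set.Ico l r) (ht : t ∈ Set.Ico l r) : a ∈ Set.Ico z t ↔ a ∈ Set.Ico z l := by
  refine and_congr_right fun _ => ⟨fun hat => ?_, fun hal => hal.trans_le ht.1⟩
  by_contra! hla
  exact ha ⟨hla, hat.trans ht.2⟩

lemma monotone_indicator_Ico {α : Type*} [Preorder α] (z a : α) :
    Monotone fun t : α => (Set.Ico z t).indicator (1 : α → ℝ) a := fun _ _ hst =>
  Set.indicator_le_indicator_of_subset (Set.Ico_subset_Ico_right hst) (fun _ => zero_le_one) a

lemma integral_indicator_Ico_zero_mul_haar1 {j m : ℕ} {a : ℝ} (ha : a ∉ dyadicIco j m) :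
    ∫ t, (Set.Ico 0 t).indicator (1 : ℝ → ℝ) a * haar1 j m t = 0 := by
  refine integral_mul_haar1_of_eqOn_const
    (c := (Set.Ico 0 ((m : ℝ) / 2 ^ j)).indicator 1 a) fun t ht => ?_
  simp only [Set.indicator_apply, mem_Ico_iff_of_notMem_Ico ha ht]

section Haar

variable {j m : ℕ × ℕ} {f g : ℝ → ℝ}

lemma haar_eq_zero_of_notMem_unitSq (hm1 : m.1 < 2 ^ j.1) (hm2 : m.2 < 2 ^ j.2) {x : ℝ × ℝ}
    (hx : x ∉ unitSq) : haar j m x = 0 := by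
  rw [unitSq, Set.mem_prod, not_and_or] at hx
  rcases hx with hx | hx
  · rw [haar, haar1_eq_zero_of_notMem (Set.notMem_subset (dyadicIco_subset_Ico_zero_one hm1) hx),
      zero_mul]
  · rw [haar, haar1_eq_zero_of_notMem (Set.notMem_subset (dyadicIco_subset_Ico_zero_one hm2) hx),
      mul_zero]

lemma mul_mul_haar (f g : ℝ → ℝ) (x : ℝ × ℝ) :
    f x.1 * g x.2 * haar j m x = f x.1 * haar1 j.1 m.1 x.1 * (g x.2 * haar1 j.2 m.2 x.2) :=
  mul_mul_mul_comm _ _ _ _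

lemma integrable_mul_mul_haar (hf : LocallyIntegrable f) (hg : LocallyIntegrable g) :
    Integrable fun x : ℝ × ℝ => f x.1 * g x.2 * haar j m x := by
  simp only [mul_mul_haar]
  exact (integrable_mul_haar1 hf).mul_prod (integrable_mul_haar1 hg)

lemma integral_mul_mul_haar (f g : ℝ → ℝ) :
    ∫ x : ℝ × ℝ, f x.1 * g x.2 * haar j m x =
      (∫ t, f t * haar1 j.1 m.1 t) * ∫ t, g t * haar1 j.2 m.2 t := by
  simp only [mul_mul_haar]
  exact integral_prod_mul (fun t => f t * haar1 j.1 m.1 t) fun t => g t * haar1 j.2 m.2 t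

end Haar

/-- The indicator of the box `[0, x₁) × [0, x₂)` at `q`, as a function of the corner `x`: the
contribution of the point `q` to the counting part of the discrepancy function. -/
def boxCount (q x : ℝ × ℝ) : ℝ :=
  (Set.Ico 0 x.1).indicator 1 q.1 * (Set.Ico 0 x.2).indicator 1 q.2

lemma disc_eq_sum_boxCount_sub (N : ℕ) (p : Fin N → ℝ × ℝ) (x : ℝ × ℝ) :
    disc N p x = ∑ i, boxCount (p i) x - N * (x.1 * x.2) := by
  simp only [disc, boxCount, Set.indicator_apply, Set.mem_Ico, Pi.one_apply, ite_zero_mul_ite_zero,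
    mul_one, and_assoc, mul_assoc]

lemma integrable_boxCount_mul_haar (j m : ℕ × ℕ) (q : ℝ × ℝ) :
    Integrable fun x => boxCount q x * haar j m x :=
  integrable_mul_mul_haar (monotone_indicator_Ico 0 q.1).locallyIntegrable
    (monotone_indicator_Ico 0 q.2).locallyIntegrable

lemma integral_boxCount_mul_haar {j m : ℕ × ℕ} {q : ℝ × ℝ} (hq : q ∉ dyadic j m) :
    ∫ x, boxCount q x * haar j m x = 0 := by
  refine (integral_mul_mul_haar (fun t => (Set.Ico 0 t).indicator 1 q.1)
    fun t => (Set.Ico 0 t).indicator 1 q.2).trans (mul_eq_zero.mpr ?_)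
  rw [dyadic, Set.mem_prod, not_and_or] at hq
  exact hq.imp integral_indicator_Ico_zero_mul_haar1 integral_indicator_Ico_zero_mul_haar1

lemma integrable_fst_mul_snd_mul_haar (j m : ℕ × ℕ) :
    Integrable fun x : ℝ × ℝ => x.1 * x.2 * haar j m x :=
  integrable_mul_mul_haar continuous_id.locallyIntegrable continuous_id.locallyIntegrable

lemma integral_fst_mul_snd_mul_haar (j m : ℕ × ℕ) :
    ∫ x : ℝ × ℝ, x.1 * x.2 * haar j m x = 1 / 2 ^ (2 * (j.1 + j.2) + 4) := by
  refine (integral_mul_mul_haar (fun t => t) fun t => t).trans ?_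
  rw [integral_id_mul_haar1, integral_id_mul_haar1]
  field_simp
  ring

theorem haar_coeff_no_point_general (N : ℕ) (p : Fin N → ℝ × ℝ) (j m : ℕ × ℕ)
    (hempty : ∀ i, p i ∉ dyadic j m) :
    ∫ x, disc N p x * haar j m x = -(N : ℝ) / 2 ^ (2 * (j.1 + j.2) + 4) := by
  have hcount : ∀ i ∈ Finset.univ, Integrable fun x => boxCount (p i) x * haar j m x :=
    fun i _ => integrable_boxCount_mul_haar j m (p i)
  have hvolume := (integrable_fst_mul_snd_mul_haar j m).const_mul (N : ℝ)
  calc ∫ x, disc N p x * haar j m x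
      = ∫ x, (∑ i, boxCount (p i) x * haar j m x) - N * (x.1 * x.2 * haar j m x) := by
        simp only [disc_eq_sum_boxCount_sub, sub_mul, Finset.sum_mul, mul_assoc]
    _ = (∑ i, ∫ x, boxCount (p i) x * haar j m x) - N * ∫ x, x.1 * x.2 * haar j m x := by
        rw [integral_sub (integrable_finsetSum _ hcount) hvolume, integral_finsetSum _ hcount,
          integral_const_mul]
    _ = 0 - N * (1 / 2 ^ (2 * (j.1 + j.2) + 4)) := by
        rw [Finset.sum_eq_zero fun i _ => integral_boxCount_mul_haar (hempty i),
          integral_fst_mul_snd_mul_haar]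
    _ = -(N : ℝ) / 2 ^ (2 * (j.1 + j.2) + 4) := by ring

/-- If `I_{j,m}` contains no point of the `N`-point set `P ⊂ [0,1)²`, then the Haar
coefficient of the discrepancy function is `μ_{j,m} = −N·2^{-2|j|-4}`. -/
theorem haar_coeff_no_point (N : ℕ) (p : Fin N → ℝ × ℝ) (hp : ∀ i, p i ∈ unitSq)
    (j m : ℕ × ℕ) (hm1 : m.1 < 2 ^ j.1) (hm2 : m.2 < 2 ^ j.2)
    (hempty : ∀ i, p i ∉ dyadic j m) :
    ∫ x in unitSq, disc N p x * haar j m x = -(N : ℝ) / 2 ^ (2 * (j.1 + j.2) + 4) := by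
  rw [setIntegral_eq_integral_of_forall_compl_eq_zero fun x hx => by
    rw [haar_eq_zero_of_notMem_unitSq hm1 hm2 hx, mul_zero]]
  exact haar_coeff_no_point_general N p j m hempty

end
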